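/- Let p and q be continuously differentiable, strictly positive probability densities on ℝⁿ, and let f: ℝⁿ → ℝ^m be measurable with each component f_i integrable with respect to both p and q. Suppose for each i ∈ {1,…,m} there is a continuously differentiable g_i: ℝⁿ → ℝⁿ solving the Stein equation (S_p g_i)(x) = f_i(x) − E_p[f_i] for all x, such that q(x)·g_i(x) → 0 as ‖x‖ → ∞, ∇·(q g_i) is Lebesgue-integrable, and ∫ q‖g_i‖₂² < ∞. Then ‖E_q[f] − E_p[f]‖₂ ≤ κ · √(F(q‖p)), where κ := √(Σ_{i=1}^m ∫ q(x)‖g_i(x)‖₂² dx) is the Stein factor of f with respect to p, q. -/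

import Mathlib

open MeasureTheory Filter Topology
open scoped RealInnerProductSpace ENNReal

/-- The divergence `∇·f` of a vector field `f : ℝⁿ → ℝⁿ`, i.e. the trace of its Jacobian. -/
noncomputable def vdiv {n : ℕ} (f : EuclideanSpace ℝ (Fin n) → EuclideanSpace ℝ (Fin n))
    (x : EuclideanSpace ℝ (Fin n)) : ℝ :=
  LinearMap.trace ℝ (EuclideanSpace ℝ (Fin n)) (fderiv ℝ f x).toLinearMap

/-- The Stein operator `(S_p g)(x) = ⟨∇ log p(x), g(x)⟩ + tr(Dg(x))`. -/
noncomputable def steinOp {n : ℕ} (p : EuclideanSpace ℝ (Fin n) → ℝ)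
    (g : EuclideanSpace ℝ (Fin n) → EuclideanSpace ℝ (Fin n))
    (x : EuclideanSpace ℝ (Fin n)) : ℝ :=
  ⟪gradient (fun y => Real.log (p y)) x, g x⟫ + vdiv g x

/-- The Fisher divergence `F(q‖p) = ∫ q(x) ‖∇ log q(x) − ∇ log p(x)‖₂² dx` (as an extended
nonnegative real, so that it is `+∞` when the integral diverges). -/
noncomputable def fisherDivL {n : ℕ} (q p : EuclideanSpace ℝ (Fin n) → ℝ) : ℝ≥0∞ :=
  ∫⁻ x, ENNReal.ofReal (q x *
    ‖gradient (fun y => Real.log (q y)) x - gradient (fun y => Real.log (p y)) x‖ ^ 2)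

/-!
Write `S_p` for the Stein operator. Since `∇ · (q g) = q · S_q g`, the divergence theorem gives
`∫ q · S_q g = 0`, so `∫ q · S_p g = ∫ q ⟪∇ log p - ∇ log q, g⟫`. When `g` solves the Stein equation
for `f`, the left-hand side is the bias of `f`, and Cauchy–Schwarz in `L²(q)` bounds the right-hand
side. There is no boundary term because `2 ‖q g‖ ≤ q + q ‖g‖²` is integrable: multiplying by a
cutoff at scale `R` costs at most `C R⁻¹ ∫ ‖q g‖`, which vanishes as `R → ∞`.
-/

section Divergence

variable {E : Type*} [NormedAddCommGroup E] [NormedSpace ℝ E] [FiniteDimensional ℝ E]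

lemma exists_contDiff_cutoff_seq :
    ∃ (χ : ℕ → E → ℝ) (δ : ℕ → ℝ), (∀ k, ContDiff ℝ (⊤ : ℕ∞) (χ k)) ∧
      (∀ k, HasCompactSupport (χ k)) ∧ (∀ k x, ‖χ k x‖ ≤ 1) ∧
      (∀ x, Tendsto (fun k => χ k x) atTop (𝓝 1)) ∧
      (∀ k x, ‖fderiv ℝ (χ k) x‖ ≤ δ k) ∧ Tendsto δ atTop (𝓝 0) := by
  let φ : ContDiffBump (0 : E) := ⟨1, 2, one_pos, one_lt_two⟩
  have hφ : ContDiff ℝ (⊤ : ℕ∞) φ := φ.contDiff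
  obtain ⟨C, hC⟩ := (hφ.continuous_fderiv (by simp)).bounded_above_of_compact_support
    (φ.hasCompactSupport.fderiv ℝ)
  let r : ℕ → ℝ := fun k => 1 / ((k : ℝ) + 1)
  have hr_pos (k : ℕ) : 0 < r k := by positivity
  have hr : Tendsto r atTop (𝓝 0) := tendsto_one_div_add_atTop_nhds_zero_nat
  refine ⟨fun k x => φ (r k • x), fun k => r k * C, fun k => hφ.comp (contDiff_const_smul _),
    fun k => φ.hasCompactSupport.comp_smul (hr_pos k).ne', fun k x => ?_, fun x => ?_,
    fun k x => ?_, by simpa using hr.mul_const C⟩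
  · rw [Real.norm_of_nonneg φ.nonneg]
    exact φ.le_one
  · have hφ_zero : φ 0 = 1 := φ.one_of_mem_closedBall (by simp [φ])
    have hrx : Tendsto (fun k => r k • x) atTop (𝓝 0) := by simpa using hr.smul_const x
    exact hφ_zero ▸ (hφ.continuous.tendsto 0).comp hrx
  · have hchain : fderiv ℝ (fun y => φ (r k • y)) x = r k • fderiv ℝ φ (r k • x) :=
      fderiv_comp_smul (r k)
    rw [hchain, norm_smul, Real.norm_of_nonneg (hr_pos k).le]
    exact mul_le_mul_of_nonneg_left (hC _) (hr_pos k).le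

variable (E) in
/-- The trace as a continuous linear functional on the endomorphisms of a finite-dimensional space.
Composed with the derivative of a vector field it gives the divergence, and its continuity allows
it to be exchanged with the integral. -/
noncomputable def traceCLM : (E →L[ℝ] E) →L[ℝ] ℝ :=
  LinearMap.toContinuousLinearMap (LinearMap.trace ℝ E ∘ₗ ContinuousLinearMap.coeLM ℝ)

lemma traceCLM_fderiv_smul {a : E → ℝ} {G : E → E} {x : E} (ha : DifferentiableAt ℝ a x)
    (hG : DifferentiableAt ℝ G x) :
    traceCLM E (fderiv ℝ (fun y => a y • G y) x) =
      a x * traceCLM E (fderiv ℝ G x) + fderiv ℝ a x (G x) := by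
  have htrace_smulRight : traceCLM E ((fderiv ℝ a x).smulRight (G x)) = fderiv ℝ a x (G x) :=
    LinearMap.trace_smulRight ..
  rw [fderiv_fun_smul ha hG, map_add, map_smul, htrace_smulRight, smul_eq_mul]

variable [MeasurableSpace E] [BorelSpace E] {μ : Measure E} [μ.IsAddHaarMeasure]

lemma integral_fderiv_eq_zero_of_hasCompactSupport {F : Type*} [NormedAddCommGroup F]
    [NormedSpace ℝ F] {G : E → F} (hG : ContDiff ℝ 1 G) (hsupp : HasCompactSupport G) :
    ∫ x, fderiv ℝ G x ∂μ = 0 := by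
  have hfderiv_int : Integrable (fderiv ℝ G) μ :=
    (hG.continuous_fderiv one_ne_zero).integrable_of_hasCompactSupport (hsupp.fderiv ℝ)
  ext v
  rw [ContinuousLinearMap.integral_apply hfderiv_int]
  simpa using integral_smul_fderiv_eq_neg_fderiv_smul_of_integrable (𝕜 := ℝ) (μ := μ)
    (f := fun _ => 1) (g := G) (v := v) (by simp)
    (by simpa using hfderiv_int.apply_continuousLinearMap v)
    (by simpa using hG.continuous.integrable_of_hasCompactSupport hsupp)
    (fun _ _ => differentiableAt_const _) (fun x _ => hG.differentiable one_ne_zero x)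

lemma integral_traceCLM_fderiv_eq_zero_of_hasCompactSupport {G : E → E} (hG : ContDiff ℝ 1 G)
    (hsupp : HasCompactSupport G) : ∫ x, traceCLM E (fderiv ℝ G x) ∂μ = 0 := by
  have hfderiv_int : Integrable (fderiv ℝ G) μ :=
    (hG.continuous_fderiv one_ne_zero).integrable_of_hasCompactSupport (hsupp.fderiv ℝ)
  rw [ContinuousLinearMap.integral_comp_comm _ hfderiv_int,
    integral_fderiv_eq_zero_of_hasCompactSupport hG hsupp, map_zero]

lemma integral_mul_traceCLM_fderiv {a : E → ℝ} {G : E → E} (ha : ContDiff ℝ 1 a)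
    (hsupp : HasCompactSupport a) (hG : ContDiff ℝ 1 G) :
    ∫ x, a x * traceCLM E (fderiv ℝ G x) ∂μ = -∫ x, fderiv ℝ a x (G x) ∂μ := by
  have hmul_int : Integrable (fun x => a x * traceCLM E (fderiv ℝ G x)) μ :=
    (ha.continuous.mul ((traceCLM E).continuous.comp
      (hG.continuous_fderiv one_ne_zero))).integrable_of_hasCompactSupport hsupp.mul_right
  have hfderiv_int : Integrable (fun x => fderiv ℝ a x (G x)) μ :=
    ((ha.continuous_fderiv one_ne_zero).clm_apply hG.continuous).integrable_of_hasCompactSupport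
      ((hsupp.fderiv ℝ).mono fun x hx hzero => hx (by simp [hzero]))
  have hsum : ∫ x, traceCLM E (fderiv ℝ (fun y => a y • G y) x) ∂μ = 0 :=
    integral_traceCLM_fderiv_eq_zero_of_hasCompactSupport (ha.smul hG) hsupp.smul_right
  simp_rw [fun x => traceCLM_fderiv_smul (ha.differentiable one_ne_zero x)
    (hG.differentiable one_ne_zero x)] at hsum
  rw [integral_add hmul_int hfderiv_int] at hsum
  exact eq_neg_of_add_eq_zero_left hsum

theorem integral_traceCLM_fderiv_eq_zero {G : E → E} (hG : ContDiff ℝ 1 G)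
    (hG_int : Integrable G μ) (hdiv : Integrable (fun x => traceCLM E (fderiv ℝ G x)) μ) :
    ∫ x, traceCLM E (fderiv ℝ G x) ∂μ = 0 := by
  obtain ⟨χ, δ, hχ, hsupp, hχ_le, hχ_lim, hfderiv_le, hδ⟩ := exists_contDiff_cutoff_seq (E := E)
  have hχ_one (k : ℕ) : ContDiff ℝ 1 (χ k) := (hχ k).of_le (mod_cast le_top)
  have hlim_div : Tendsto (fun k => ∫ x, χ k x * traceCLM E (fderiv ℝ G x) ∂μ) atTop
      (𝓝 (∫ x, traceCLM E (fderiv ℝ G x) ∂μ)) := by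
    refine tendsto_integral_of_dominated_convergence (fun x => ‖traceCLM E (fderiv ℝ G x)‖)
      (fun k => (hχ k).continuous.aestronglyMeasurable.mul hdiv.aestronglyMeasurable) hdiv.norm
      (fun k => .of_forall fun x => ?_) (.of_forall fun x => ?_)
    · rw [norm_mul]
      exact mul_le_of_le_one_left (norm_nonneg _) (hχ_le k x)
    · simpa using (hχ_lim x).mul_const (traceCLM E (fderiv ℝ G x))
  have hlim_zero : Tendsto (fun k => ∫ x, χ k x * traceCLM E (fderiv ℝ G x) ∂μ) atTop (𝓝 0) := by
    refine squeeze_zero_norm (a := fun k => δ k * ∫ x, ‖G x‖ ∂μ) (fun k => ?_)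
      (by simpa using hδ.mul_const (∫ x, ‖G x‖ ∂μ))
    rw [integral_mul_traceCLM_fderiv (hχ_one k) (hsupp k) hG, norm_neg, ← integral_const_mul]
    exact norm_integral_le_of_norm_le (hG_int.norm.const_mul (δ k))
      (.of_forall fun x => (fderiv ℝ (χ k) x).le_of_opNorm_le (hfderiv_le k x) (G x))
  exact tendsto_nhds_unique hlim_div hlim_zero

end Divergence

section WeightedL2

variable {α : Type*} [MeasurableSpace α] {μ : Measure α}

lemma enorm_integral_inner_sq_le {𝕜 F : Type*} [RCLike 𝕜] [NormedAddCommGroup F]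
    [InnerProductSpace 𝕜 F] {u v : α → F} (hu : AEStronglyMeasurable u μ)
    (hv : AEStronglyMeasurable v μ) :
    ‖∫ x, inner 𝕜 (u x) (v x) ∂μ‖ₑ ^ 2 ≤ (∫⁻ x, ‖u x‖ₑ ^ 2 ∂μ) * ∫⁻ x, ‖v x‖ₑ ^ 2 ∂μ := by
  have hle : ‖∫ x, inner 𝕜 (u x) (v x) ∂μ‖ₑ ≤ ∫⁻ x, ‖u x‖ₑ * ‖v x‖ₑ ∂μ :=
    (enorm_integral_le_lintegral_enorm _).trans
      (lintegral_mono fun x => by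
        simpa only [enorm_eq_nnnorm, ← ENNReal.coe_mul, ENNReal.coe_le_coe] using
          nnnorm_inner_le_nnnorm (𝕜 := 𝕜) (u x) (v x))
  have hholder := ENNReal.lintegral_mul_le_Lp_mul_Lq μ Real.HolderConjugate.two_two
    hu.enorm hv.enorm
  have hsq (t : ℝ≥0∞) : (t ^ (1 / 2 : ℝ)) ^ 2 = t := by
    rw [← ENNReal.rpow_mul_natCast]
    norm_num
  simpa only [Pi.mul_apply, ENNReal.rpow_ofNat, mul_pow, hsq] using
    pow_le_pow_left' (hle.trans hholder) 2

lemma enorm_integral_mul_inner_sq_le {F : Type*} [NormedAddCommGroup F] [InnerProductSpace ℝ F]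
    {w : α → ℝ} {u v : α → F} (hw_nonneg : ∀ x, 0 ≤ w x) (hw : AEStronglyMeasurable w μ)
    (hu : AEStronglyMeasurable u μ) (hv : AEStronglyMeasurable v μ) :
    ‖∫ x, w x * ⟪u x, v x⟫ ∂μ‖ₑ ^ 2 ≤ (∫⁻ x, ENNReal.ofReal (w x * ‖u x‖ ^ 2) ∂μ) *
      ∫⁻ x, ENNReal.ofReal (w x * ‖v x‖ ^ 2) ∂μ := by
  have hsqrt : AEStronglyMeasurable (fun x => √(w x)) μ :=
    Real.continuous_sqrt.comp_aestronglyMeasurable hw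
  have hinner (x : α) : ⟪√(w x) • u x, √(w x) • v x⟫ = w x * ⟪u x, v x⟫ := by
    rw [real_inner_smul_left, real_inner_smul_right, ← mul_assoc, Real.mul_self_sqrt (hw_nonneg x)]
  have henorm (x : α) (y : F) : ‖√(w x) • y‖ₑ ^ 2 = ENNReal.ofReal (w x * ‖y‖ ^ 2) := by
    rw [← ofReal_norm, ← ENNReal.ofReal_pow (norm_nonneg _), norm_smul, mul_pow,
      Real.norm_of_nonneg (Real.sqrt_nonneg _), Real.sq_sqrt (hw_nonneg x)]
  simpa only [hinner, henorm] using
    enorm_integral_inner_sq_le (𝕜 := ℝ) (hsqrt.fun_smul hu) (hsqrt.fun_smul hv)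

lemma integrable_smul_of_integrable_mul_norm_sq {F : Type*} [NormedAddCommGroup F]
    [NormedSpace ℝ F] {w : α → ℝ} {u : α → F} (hw_nonneg : ∀ x, 0 ≤ w x) (hw : Integrable w μ)
    (hu : AEStronglyMeasurable u μ) (hsq : Integrable (fun x => w x * ‖u x‖ ^ 2) μ) :
    Integrable (fun x => w x • u x) μ := by
  refine (hw.add hsq).mono' (hw.aestronglyMeasurable.smul hu) (.of_forall fun x => ?_)
  calc ‖w x • u x‖ = w x * ‖u x‖ := by rw [norm_smul, Real.norm_of_nonneg (hw_nonneg x)]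
    _ ≤ w x * (1 + ‖u x‖ ^ 2) :=
      mul_le_mul_of_nonneg_left (by nlinarith [sq_nonneg (‖u x‖ - 1)]) (hw_nonneg x)
    _ = w x + w x * ‖u x‖ ^ 2 := by ring

end WeightedL2

section LogGradient

variable {H : Type*} [NormedAddCommGroup H] [InnerProductSpace ℝ H] [CompleteSpace H] {q : H → ℝ}

lemma mul_inner_gradient_log {x : H} (hq : DifferentiableAt ℝ q x) (hqx : q x ≠ 0) (v : H) :
    q x * ⟪gradient (fun y => Real.log (q y)) x, v⟫ = fderiv ℝ q x v := by
  rw [inner_gradient_left, fderiv.log hq hqx]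
  simp [hqx]

lemma continuous_gradient_log (hq : ContDiff ℝ 1 q) (hq_ne : ∀ x, q x ≠ 0) :
    Continuous (gradient fun y => Real.log (q y)) :=
  (InnerProductSpace.toDual ℝ H).symm.continuous.comp
    ((hq.log hq_ne).continuous_fderiv one_ne_zero)

end LogGradient

section Stein

variable {n : ℕ} {p q : EuclideanSpace ℝ (Fin n) → ℝ}
  {g : EuclideanSpace ℝ (Fin n) → EuclideanSpace ℝ (Fin n)}

lemma vdiv_smul_eq_mul_steinOp {x : EuclideanSpace ℝ (Fin n)} (hq : DifferentiableAt ℝ q x)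
    (hqx : q x ≠ 0) (hg : DifferentiableAt ℝ g x) :
    vdiv (fun y => q y • g y) x = q x * steinOp q g x := by
  rw [steinOp, mul_add, mul_inner_gradient_log hq hqx, add_comm]
  exact traceCLM_fderiv_smul hq hg

theorem integral_mul_steinOp_eq_integral_inner (hq : ContDiff ℝ 1 q) (hq_ne : ∀ x, q x ≠ 0)
    (hg : ContDiff ℝ 1 g) (hqg : Integrable fun x => q x • g x)
    (hdiv : Integrable (vdiv fun x => q x • g x))
    (hstein : Integrable fun x => q x * steinOp p g x) :
    ∫ x, q x * steinOp p g x = ∫ x, q x *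
      ⟪gradient (fun y => Real.log (p y)) x - gradient (fun y => Real.log (q y)) x, g x⟫ := by
  have hdiv_zero : ∫ x, vdiv (fun y => q y • g y) x = 0 :=
    integral_traceCLM_fderiv_eq_zero (hq.smul hg) hqg hdiv
  rw [← sub_zero (∫ x, q x * steinOp p g x), ← hdiv_zero, ← integral_sub hstein hdiv]
  refine integral_congr_ae (.of_forall fun x => ?_)
  simp only [vdiv_smul_eq_mul_steinOp (hq.differentiable one_ne_zero x) (hq_ne x)
    (hg.differentiable one_ne_zero x), steinOp, inner_sub_left]
  ring

theorem enorm_integral_mul_steinOp_sq_le (hp : ContDiff ℝ 1 p) (hp_ne : ∀ x, p x ≠ 0)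
    (hq : ContDiff ℝ 1 q) (hqpos : ∀ x, 0 < q x) (hq_int : Integrable q) (hg : ContDiff ℝ 1 g)
    (hdiv : Integrable (vdiv fun x => q x • g x))
    (hstein : Integrable fun x => q x * steinOp p g x)
    (hg_sq : Integrable fun x => q x * ‖g x‖ ^ 2) :
    ‖∫ x, q x * steinOp p g x‖ₑ ^ 2 ≤
      ENNReal.ofReal (∫ x, q x * ‖g x‖ ^ 2) * fisherDivL q p := by
  have hq_nonneg (x) : 0 ≤ q x := (hqpos x).le
  have hq_ne (x) : q x ≠ 0 := (hqpos x).ne'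
  have hqg : Integrable fun x => q x • g x := integrable_smul_of_integrable_mul_norm_sq
    hq_nonneg hq_int hg.continuous.aestronglyMeasurable hg_sq
  have hscore := (continuous_gradient_log hp hp_ne).sub (continuous_gradient_log hq hq_ne)
  rw [integral_mul_steinOp_eq_integral_inner hq hq_ne hg hqg hdiv hstein, mul_comm, fisherDivL,
    ofReal_integral_eq_lintegral_ofReal hg_sq
      (.of_forall fun x => mul_nonneg (hq_nonneg x) (sq_nonneg _))]
  simp only [norm_sub_rev (gradient (fun y => Real.log (q y)) _)]
  exact enorm_integral_mul_inner_sq_le hq_nonneg hq.continuous.aestronglyMeasurable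
    hscore.aestronglyMeasurable hg.continuous.aestronglyMeasurable

variable {ι : Type*} [Fintype ι]

/-- The Stein factor `κ` of a family `g` of solutions of the Stein equation: the norm of `g` in
`L²(q)`. The integral is the Bochner one, so a component with `∫ q ‖g i‖² = ∞` contributes `0`. -/
noncomputable def steinFactor (q : EuclideanSpace ℝ (Fin n) → ℝ)
    (g : ι → EuclideanSpace ℝ (Fin n) → EuclideanSpace ℝ (Fin n)) : ℝ :=
  √(∑ i, ∫ x, q x * ‖g i x‖ ^ 2)

lemma ofReal_steinFactor_sq (hq_nonneg : ∀ x, 0 ≤ q x)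
    (g : ι → EuclideanSpace ℝ (Fin n) → EuclideanSpace ℝ (Fin n)) :
    ENNReal.ofReal (steinFactor q g) ^ 2 = ∑ i, ENNReal.ofReal (∫ x, q x * ‖g i x‖ ^ 2) := by
  have hnonneg (i : ι) : 0 ≤ ∫ x, q x * ‖g i x‖ ^ 2 :=
    integral_nonneg fun x => mul_nonneg (hq_nonneg x) (sq_nonneg _)
  rw [steinFactor, ← ENNReal.ofReal_pow (Real.sqrt_nonneg _),
    Real.sq_sqrt (Finset.sum_nonneg fun i _ => hnonneg i),
    ENNReal.ofReal_sum_of_nonneg fun i _ => hnonneg i]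

lemma enorm_sq_eq_sum_enorm_sq (b : EuclideanSpace ℝ ι) : ‖b‖ₑ ^ 2 = ∑ i, ‖b i‖ₑ ^ 2 := by
  simp only [← ofReal_norm, ← ENNReal.ofReal_pow (norm_nonneg _),
    EuclideanSpace.norm_sq_eq, ENNReal.ofReal_sum_of_nonneg fun i _ => sq_nonneg ‖b i‖]

end Stein

theorem bias_le_steinFactor_sqrt_fisher_general {n : ℕ} {ι : Type*} [Fintype ι]
    (p q : EuclideanSpace ℝ (Fin n) → ℝ)
    (f : EuclideanSpace ℝ (Fin n) → EuclideanSpace ℝ ι) (c : EuclideanSpace ℝ ι)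
    (g : ι → EuclideanSpace ℝ (Fin n) → EuclideanSpace ℝ (Fin n))
    (hp : ContDiff ℝ 1 p) (hppos : ∀ x, 0 < p x)
    (hq : ContDiff ℝ 1 q) (hqpos : ∀ x, 0 < q x) (hqnorm : ∫ x, q x = 1)
    (hfq : ∀ i, Integrable (fun x => q x * f x i))
    (hgC : ∀ i, ContDiff ℝ 1 (g i))
    (hstein : ∀ i x, steinOp p (g i) x = f x i - c i)
    (hdiv : ∀ i, Integrable (vdiv fun x => q x • g i x))
    (hg2 : ∀ i, Integrable (fun x => q x * ‖g i x‖ ^ 2)) :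
    ‖(∫ x, q x • f x) - c‖ₑ ≤
      ENNReal.ofReal (steinFactor q g) * fisherDivL q p ^ (2⁻¹ : ℝ) := by
  have hq_int : Integrable q := .of_integral_ne_zero (hqnorm ▸ one_ne_zero)
  have hsub (i : ι) (x) : q x * steinOp p (g i) x = q x * f x i - q x * c i := by
    rw [hstein, mul_sub]
  have hstein_int (i : ι) : Integrable fun x => q x * steinOp p (g i) x := by
    simpa only [hsub] using (hfq i).sub' (hq_int.mul_const (c i))
  have hbias (i : ι) : ((∫ x, q x • f x) - c) i = ∫ x, q x * steinOp p (g i) x := by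
    rw [PiLp.sub_apply, eval_integral_piLp hfq]
    simp only [hsub, integral_sub (hfq i) (hq_int.mul_const (c i)), integral_mul_const, hqnorm,
      one_mul, PiLp.smul_apply, smul_eq_mul]
  have hfisher : (fisherDivL q p ^ (2⁻¹ : ℝ)) ^ 2 = fisherDivL q p :=
    ENNReal.rpow_inv_natCast_pow two_ne_zero _
  rw [← ENNReal.pow_le_pow_left_iff two_ne_zero, mul_pow, hfisher, enorm_sq_eq_sum_enorm_sq,
    ofReal_steinFactor_sq fun x => (hqpos x).le, Finset.sum_mul]
  refine Finset.sum_le_sum fun i _ => ?_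
  rw [hbias]
  exact enorm_integral_mul_steinOp_sq_le hp (fun x => (hppos x).ne') hq hqpos hq_int (hgC i)
    (hdiv i) (hstein_int i) (hg2 i)

/-- If `p, q` are `C¹` strictly positive probability densities on `ℝⁿ`, `f : ℝⁿ → ℝ^m` is
measurable with each component integrable w.r.t. both `p` and `q`, and each component `f_i`
admits a `C¹` Stein solution `g i` w.r.t. `p` with `q·(g i) → 0` at infinity, `∇·(q (g i))`
integrable, and `∫ q‖g i‖² < ∞`, then
`‖E_q[f] − E_p[f]‖₂ ≤ κ · √(F(q‖p))` where `κ = √(Σᵢ ∫ q‖g i‖²)` is the Stein factor. -/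
theorem bias_le_steinFactor_sqrt_fisher {n m : ℕ}
    (p q : EuclideanSpace ℝ (Fin n) → ℝ)
    (f : EuclideanSpace ℝ (Fin n) → EuclideanSpace ℝ (Fin m))
    (g : Fin m → EuclideanSpace ℝ (Fin n) → EuclideanSpace ℝ (Fin n))
    (hp : ContDiff ℝ 1 p) (hppos : ∀ x, 0 < p x) (hpnorm : ∫ x, p x = 1)
    (hq : ContDiff ℝ 1 q) (hqpos : ∀ x, 0 < q x) (hqnorm : ∫ x, q x = 1)
    (hf : Measurable f)
    (hfp : ∀ i, Integrable (fun x => p x * f x i))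
    (hfq : ∀ i, Integrable (fun x => q x * f x i))
    (hgC : ∀ i, ContDiff ℝ 1 (g i))
    (hstein : ∀ i x, steinOp p (g i) x = f x i - ∫ y, p y * f y i)
    (hdecay : ∀ i, Tendsto (fun x => q x • g i x)
      (cocompact (EuclideanSpace ℝ (Fin n))) (𝓝 0))
    (hdiv : ∀ i, Integrable (vdiv fun x => q x • g i x))
    (hg2 : ∀ i, Integrable (fun x => q x * ‖g i x‖ ^ 2)) :
    (‖(∫ x, q x • f x) - ∫ x, p x • f x‖₊ : ℝ≥0∞)
      ≤ ENNReal.ofReal (Real.sqrt (∑ i, ∫ x, q x * ‖g i x‖ ^ 2)) *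
        (fisherDivL q p) ^ (2⁻¹ : ℝ) := by
  refine bias_le_steinFactor_sqrt_fisher_general p q f (∫ x, p x • f x) g hp hppos hq hqpos hqnorm
    hfq hgC (fun i x => ?_) hdiv hg2
  exact (hstein i x).trans (by rw [eval_integral_piLp (f := fun x => p x • f x) hfp]; rfl)
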